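/- Let N, M ≥ 1 and let R ∈ ℝ^{N×M}. Consider one step of the alternating (Closest Multiplicative Decomposition) update: starting from a nonzero Ψ ∈ ℝ^N, set Φ*_j = (Σ_i Ψ_i R_{ij}) / (Σ_i Ψ_i²) for each j, and then, provided Σ_j (Φ*_j)² > 0, set Ψ*_i = (Σ_j Φ*_j R_{ij}) / (Σ_j (Φ*_j)²) for each i. Then the rank-one approximation error is monotonically non-increasing along the update: Σ_{i,j} (R_{ij} − Φ*_j Ψ*_i)² ≤ Σ_{i,j} (R_{ij} − Φ*_j Ψ_i)² ≤ Σ_{i,j} (R_{ij} − Φ_j Ψ_i)² for every Φ ∈ ℝ^M. -/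

import Mathlib

/-!
With one factor fixed, the rank-one error splits into independent one-parameter least-squares
problems, one for each row (or column) of `R`. The closed-form updates are exactly the solutions of
their normal equations, under which the residual is orthogonal to the fixed factor, so by Pythagoras
any other choice of the free factor can only increase the error.
-/

section OneParameter

variable {ι K : Type*} [CommRing K] {s : Finset ι} {a r : ι → K} {c : K}

theorem sum_sub_mul_sq_eq_add_of_normal_eq (hc : c * ∑ i ∈ s, a i ^ 2 = ∑ i ∈ s, a i * r i)
    (d : K) :
    ∑ i ∈ s, (r i - a i * d) ^ 2 =
      ∑ i ∈ s, (r i - a i * c) ^ 2 + (c - d) ^ 2 * ∑ i ∈ s, a i ^ 2 := by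
  have residual_orthogonal : ∑ i ∈ s, a i * (r i - a i * c) = 0 := by
    calc ∑ i ∈ s, a i * (r i - a i * c)
        = ∑ i ∈ s, a i * r i - c * ∑ i ∈ s, a i ^ 2 := by
          rw [Finset.mul_sum, ← Finset.sum_sub_distrib]
          exact Finset.sum_congr rfl fun i _ => by ring
      _ = 0 := by rw [hc, sub_self]
  calc ∑ i ∈ s, (r i - a i * d) ^ 2
      = ∑ i ∈ s, (r i - a i * c) ^ 2 + 2 * (c - d) * ∑ i ∈ s, a i * (r i - a i * c) +
          (c - d) ^ 2 * ∑ i ∈ s, a i ^ 2 := by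
        simp only [Finset.mul_sum, ← Finset.sum_add_distrib]
        exact Finset.sum_congr rfl fun i _ => by ring
    _ = ∑ i ∈ s, (r i - a i * c) ^ 2 + (c - d) ^ 2 * ∑ i ∈ s, a i ^ 2 := by
        rw [residual_orthogonal, mul_zero, add_zero]

theorem sum_sub_mul_sq_le_of_normal_eq [LinearOrder K] [IsOrderedRing K]
    (hc : c * ∑ i ∈ s, a i ^ 2 = ∑ i ∈ s, a i * r i) (d : K) :
    ∑ i ∈ s, (r i - a i * c) ^ 2 ≤ ∑ i ∈ s, (r i - a i * d) ^ 2 := by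
  rw [sum_sub_mul_sq_eq_add_of_normal_eq hc d]
  exact le_add_of_nonneg_right <|
    mul_nonneg (sq_nonneg _) (Finset.sum_nonneg fun i _ => sq_nonneg (a i))

end OneParameter

section RankOne

open Matrix

variable {ι κ K : Type*} [Fintype ι] [Fintype κ] [CommRing K]

/-- The squared Frobenius error of approximating `R` by the rank-one matrix with entries
`Φ j * Ψ i`, the objective of the alternating updates. The column factor `Φ` comes first. -/
def rankOneError (R : Matrix ι κ K) (Φ : κ → K) (Ψ : ι → K) : K :=
  ∑ i, ∑ j, (R i j - Φ j * Ψ i) ^ 2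

theorem rankOneError_transpose (R : Matrix ι κ K) (Φ : κ → K) (Ψ : ι → K) :
    rankOneError Rᵀ Ψ Φ = rankOneError R Φ Ψ := by
  simp only [rankOneError, transpose_apply, mul_comm (Ψ _)]
  exact Finset.sum_comm

variable [LinearOrder K] [IsOrderedRing K] {R : Matrix ι κ K}

theorem rankOneError_le_of_row_normal_eq {Φ : κ → K} {Ψstar : ι → K}
    (hΨstar : ∀ i, Ψstar i * ∑ j, Φ j ^ 2 = ∑ j, Φ j * R i j) (Ψ : ι → K) :
    rankOneError R Φ Ψstar ≤ rankOneError R Φ Ψ :=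
  Finset.sum_le_sum fun i _ => sum_sub_mul_sq_le_of_normal_eq (hΨstar i) (Ψ i)

theorem rankOneError_le_of_col_normal_eq {Ψ : ι → K} {Φstar : κ → K}
    (hΦstar : ∀ j, Φstar j * ∑ i, Ψ i ^ 2 = ∑ i, Ψ i * R i j) (Φ : κ → K) :
    rankOneError R Φstar Ψ ≤ rankOneError R Φ Ψ := by
  rw [← rankOneError_transpose R Φstar, ← rankOneError_transpose R Φ]
  exact rankOneError_le_of_row_normal_eq hΦstar Φ

theorem cmd_alternating_update_monotone_general {Ψ Ψstar : ι → K} {Φstar : κ → K}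
    (hΦstar : ∀ j, Φstar j * ∑ i, Ψ i ^ 2 = ∑ i, Ψ i * R i j)
    (hΨstar : ∀ i, Ψstar i * ∑ j, Φstar j ^ 2 = ∑ j, Φstar j * R i j) (Φ : κ → K) :
    rankOneError R Φstar Ψstar ≤ rankOneError R Φstar Ψ ∧
      rankOneError R Φstar Ψ ≤ rankOneError R Φ Ψ :=
  ⟨rankOneError_le_of_row_normal_eq hΨstar Ψ, rankOneError_le_of_col_normal_eq hΦstar Φ⟩

end RankOne

/-- One step of the alternating Closest Multiplicative Decomposition update does
not increase the rank-one approximation error: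
`err(Φ*, Ψ*) ≤ err(Φ*, Ψ) ≤ err(Φ, Ψ)` for every `Φ`. -/
theorem cmd_alternating_update_monotone
    (N M : ℕ) (hN : 1 ≤ N) (hM : 1 ≤ M)
    (R : Fin N → Fin M → ℝ) (Ψ : Fin N → ℝ)
    (hΨ : 0 < ∑ i, (Ψ i) ^ 2)
    (Φstar : Fin M → ℝ)
    (hΦstar : ∀ j, Φstar j = (∑ i, Ψ i * R i j) / (∑ i, (Ψ i) ^ 2))
    (hΦpos : 0 < ∑ j, (Φstar j) ^ 2)
    (Ψstar : Fin N → ℝ)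
    (hΨstar : ∀ i, Ψstar i = (∑ j, Φstar j * R i j) / (∑ j, (Φstar j) ^ 2)) :
    ∀ Φ : Fin M → ℝ,
      (∑ i, ∑ j, (R i j - Φstar j * Ψstar i) ^ 2 ≤
        ∑ i, ∑ j, (R i j - Φstar j * Ψ i) ^ 2) ∧
      (∑ i, ∑ j, (R i j - Φstar j * Ψ i) ^ 2 ≤
        ∑ i, ∑ j, (R i j - Φ j * Ψ i) ^ 2) := by
  exact cmd_alternating_update_monotone_general
    (fun j => (eq_div_iff hΨ.ne').mp (hΦstar j)) (fun i => (eq_div_iff hΦpos.ne').mp (hΨstar i))
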